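/- arXiv:1604.08127 — 8 statements merged into one kernel-verified Lean document; each statement's English description precedes it below -/
import Mathlib

section
/- Let P be an X×X row-stochastic matrix and let π ∈ ℝ^X satisfy Pᵀπ = π. Then Pᵀ|π| = |π|, where |π| denotes the vector whose entries are the absolute values of the entries of π. -/
/-- If `P` is row-stochastic and `Pᵀ π = π`, then `Pᵀ |π| = |π|` entrywise. -/
theorem stmt_1 (X : ℕ) (P : Matrix (Fin X) (Fin X) ℝ)
    (hnn : ∀ i j, 0 ≤ P i j) (hrow : ∀ i, ∑ j, P i j = 1)
    (π : Fin X → ℝ) (hπ : P.transpose.mulVec π = π) :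
    P.transpose.mulVec (fun i => |π i|) = fun i => |π i| := by
  have e : ∀ (v : Fin X → ℝ) j, P.transpose.mulVec v j = ∑ i, P i j * v i := by
    intro v j
    simp [Matrix.mulVec, dotProduct, Matrix.transpose_apply]
  have hle : ∀ j ∈ (Finset.univ : Finset (Fin X)),
      |π j| ≤ P.transpose.mulVec (fun i => |π i|) j := by
    intro j _
    have h1 : π j = ∑ i, P i j * π i := by rw [← e, hπ]
    rw [e, h1]
    refine (Finset.abs_sum_le_sum_abs _ _).trans (le_of_eq ?_)
    refine Finset.sum_congr rfl fun i _ => ?_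
    rw [abs_mul, abs_of_nonneg (hnn i j)]
  have hsum : ∑ j, |π j| = ∑ j, P.transpose.mulVec (fun i => |π i|) j := by
    simp only [e]
    rw [Finset.sum_comm]
    refine Finset.sum_congr rfl fun i _ => ?_
    rw [← Finset.sum_mul, hrow, one_mul]
  funext j
  exact ((Finset.sum_eq_sum_iff_of_le hle).1 hsum j (Finset.mem_univ j)).symm
end

section
/- Let P be an X×X row-stochastic matrix that is TP2. Then for every n ≥ 1 the power Pⁿ is TP2 and row-stochastic, the sequence (Pⁿ)_{11} is nonincreasing in n, the sequence (Pⁿ)_{1X} is nondecreasing in n, and for each fixed n the entry (Pⁿ)_{i1} is nonincreasing in i while (Pⁿ)_{iX} is nondecreasing in i. -/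
/-- A matrix is TP2 if every 2×2 minor is nonnegative:
`M_{il} M_{kj} ≤ M_{ij} M_{kl}` whenever `i < k` and `j < l`. -/
def IsTP2 {X : ℕ} (P : Matrix (Fin X) (Fin X) ℝ) : Prop :=
  ∀ i k j l : Fin X, i < k → j < l → P i l * P k j ≤ P i j * P k l

theorem IsTP2.mul_aux {X : ℕ} {A B : Matrix (Fin X) (Fin X) ℝ} (hA : IsTP2 A) (hB : IsTP2 B) :
    IsTP2 (A * B) := by
  intro i k j l hik hjl
  have key : ∀ p q : Fin X, 0 ≤ (A i p * A k q - A i q * A k p) * (B p j * B q l - B p l * B q j) := by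
    intro p q
    rcases lt_trichotomy p q with h | h | h
    · exact mul_nonneg (sub_nonneg.2 (hA i k p q hik h)) (sub_nonneg.2 (hB p q j l h hjl))
    · subst h
      simp
    · have h1 := hA i k q p hik h
      have h2 := hB q p j l h hjl
      exact mul_nonneg_of_nonpos_of_nonpos (by linarith) (by linarith)
  have hs : 0 ≤ ∑ p, ∑ q, (A i p * A k q - A i q * A k p) * (B p j * B q l - B p l * B q j) :=
    Finset.sum_nonneg fun p _ => Finset.sum_nonneg fun q _ => key p q
  have e : ∑ p, ∑ q, (A i p * A k q - A i q * A k p) * (B p j * B q l - B p l * B q j)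
      = (∑ p, ∑ q, (A i p * B p j) * (A k q * B q l)) - (∑ p, ∑ q, (A i p * B p l) * (A k q * B q j))
        - (∑ p, ∑ q, (A k p * B p j) * (A i q * B q l))
        + (∑ p, ∑ q, (A k p * B p l) * (A i q * B q j)) := by
    simp only [← Finset.sum_sub_distrib, ← Finset.sum_add_distrib]
    refine Finset.sum_congr rfl fun p _ => Finset.sum_congr rfl fun q _ => ?_
    ring
  rw [e] at hs
  simp only [← Finset.sum_mul_sum] at hs
  simp only [Matrix.mul_apply]
  linarith

theorem stoch_pow_aux {X : ℕ} {P : Matrix (Fin X) (Fin X) ℝ}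
    (hnn : ∀ i j, 0 ≤ P i j) (hrow : ∀ i, ∑ j, P i j = 1) (hTP2 : IsTP2 P) (n : ℕ) (hn : 1 ≤ n) :
    IsTP2 (P ^ n) ∧ (∀ i j, 0 ≤ (P ^ n) i j) ∧ (∀ i, ∑ j, (P ^ n) i j = 1) := by
  induction n, hn using Nat.le_induction with
  | base => simpa using ⟨hTP2, hnn, hrow⟩
  | succ n hn ih =>
    obtain ⟨h1, h2, h3⟩ := ih
    rw [pow_succ]
    refine ⟨h1.mul_aux hTP2, fun i j => ?_, fun i => ?_⟩
    · rw [Matrix.mul_apply]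
      exact Finset.sum_nonneg fun p _ => mul_nonneg (h2 _ _) (hnn _ _)
    · simp only [Matrix.mul_apply]
      rw [Finset.sum_comm]
      simp only [← Finset.mul_sum, hrow, mul_one, h3]

theorem col_aux {X : ℕ} (hX : 0 < X) {M : Matrix (Fin X) (Fin X) ℝ}
    (hrow : ∀ i, ∑ j, M i j = 1) (h : IsTP2 M) (i j : Fin X) (hij : i ≤ j) :
    M j ⟨0, hX⟩ ≤ M i ⟨0, hX⟩ ∧ M i ⟨X - 1, by omega⟩ ≤ M j ⟨X - 1, by omega⟩ := by
  rcases hij.eq_or_lt with rfl | hlt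
  · exact ⟨le_rfl, le_rfl⟩
  constructor
  · have : ∑ l, M i l * M j ⟨0, hX⟩ ≤ ∑ l, M i ⟨0, hX⟩ * M j l := by
      refine Finset.sum_le_sum fun l _ => ?_
      rcases (show (⟨0, hX⟩ : Fin X) ≤ l from Nat.zero_le _).eq_or_lt with rfl | hl
      · exact le_rfl
      · exact h i j _ l hlt hl
    simpa [← Finset.sum_mul, ← Finset.mul_sum, hrow] using this
  · have : ∑ l, M i ⟨X - 1, by omega⟩ * M j l ≤ ∑ l, M i l * M j ⟨X - 1, by omega⟩ := by
      refine Finset.sum_le_sum fun l _ => ?_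
      rcases (show l ≤ (⟨X - 1, by omega⟩ : Fin X) from Nat.le_sub_one_of_lt l.2).eq_or_lt with rfl | hl
      · exact le_rfl
      · exact h i j l _ hlt hl
    simpa [← Finset.sum_mul, ← Finset.mul_sum, hrow] using this

/-- For a TP2 row-stochastic matrix `P`: every power `Pⁿ` (n ≥ 1) is TP2 and row-stochastic,
`(Pⁿ)₁₁` is nonincreasing in `n`, `(Pⁿ)₁X` is nondecreasing in `n`, and for each fixed `n` the
first column of `Pⁿ` is nonincreasing down the column while the last column is nondecreasing. -/
theorem stmt_6 (X : ℕ) (hX : 0 < X) (P : Matrix (Fin X) (Fin X) ℝ)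
    (hnn : ∀ i j, 0 ≤ P i j) (hrow : ∀ i, ∑ j, P i j = 1) (hTP2 : IsTP2 P) :
    (∀ n : ℕ, 1 ≤ n → IsTP2 (P ^ n) ∧ (∀ i j, 0 ≤ (P ^ n) i j) ∧
        (∀ i, ∑ j, (P ^ n) i j = 1)) ∧
    (∀ n : ℕ, 1 ≤ n → (P ^ (n + 1)) ⟨0, hX⟩ ⟨0, hX⟩ ≤ (P ^ n) ⟨0, hX⟩ ⟨0, hX⟩) ∧
    (∀ n : ℕ, 1 ≤ n →
        (P ^ n) ⟨0, hX⟩ ⟨X - 1, by omega⟩ ≤ (P ^ (n + 1)) ⟨0, hX⟩ ⟨X - 1, by omega⟩) ∧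
    (∀ n : ℕ, 1 ≤ n → ∀ i j : Fin X, i ≤ j →
        (P ^ n) j ⟨0, hX⟩ ≤ (P ^ n) i ⟨0, hX⟩ ∧
        (P ^ n) i ⟨X - 1, by omega⟩ ≤ (P ^ n) j ⟨X - 1, by omega⟩) := by
  have H := stoch_pow_aux hnn hrow hTP2
  have C : ∀ n : ℕ, 1 ≤ n → ∀ i j : Fin X, i ≤ j →
        (P ^ n) j ⟨0, hX⟩ ≤ (P ^ n) i ⟨0, hX⟩ ∧
        (P ^ n) i ⟨X - 1, by omega⟩ ≤ (P ^ n) j ⟨X - 1, by omega⟩ :=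
    fun n hn => col_aux hX (H n hn).2.2 (H n hn).1
  refine ⟨H, fun n hn => ?_, fun n hn => ?_, C⟩
  · rw [pow_succ', Matrix.mul_apply]
    calc _ ≤ ∑ p, P ⟨0, hX⟩ p * (P ^ n) ⟨0, hX⟩ ⟨0, hX⟩ :=
          Finset.sum_le_sum fun p _ => mul_le_mul_of_nonneg_left
            (C n hn ⟨0, hX⟩ p (Nat.zero_le _)).1 (hnn _ _)
      _ = _ := by rw [← Finset.sum_mul, hrow, one_mul]
  · rw [pow_succ', Matrix.mul_apply]
    calc _ = ∑ p, P ⟨0, hX⟩ p * (P ^ n) ⟨0, hX⟩ ⟨X - 1, by omega⟩ := by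
          rw [← Finset.sum_mul, hrow, one_mul]
      _ ≤ _ := Finset.sum_le_sum fun p _ => mul_le_mul_of_nonneg_left
            (C n hn ⟨0, hX⟩ p (Nat.zero_le _)).2 (hnn _ _)
end

section
/- Let P be an X×X row-stochastic matrix that is TP2, and let π, π̄ be probability vectors on {1,…,X} with π ≤_r π̄ in the monotone likelihood ratio (MLR) order. Then Pᵀπ ≤_r Pᵀπ̄. Consequently, if a probability vector π₀ satisfies π₀ ≤_r Pᵀπ₀, then the optimal predictor sequence π_n = (Pᵀ)ⁿπ₀ is MLR-increasing: π_n ≤_r π_{n+1} for all n ≥ 0. -/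
/-- `MLRle q p` means `q ≤_r p` in the monotone likelihood ratio order:
`p(i) q(j) ≥ p(j) q(i)` whenever `i ≥ j`. -/
def MLRle {X : ℕ} (q p : Fin X → ℝ) : Prop :=
  ∀ i j : Fin X, j ≤ i → p j * q i ≤ p i * q j

theorem mlr_step_aux {X : ℕ} (P : Matrix (Fin X) (Fin X) ℝ) (hTP2 : IsTP2 P)
    (q p : Fin X → ℝ) (h : MLRle q p) :
    MLRle (P.transpose.mulVec q) (P.transpose.mulVec p) := by
  intro i j hji
  rcases hji.eq_or_lt with rfl | hlt
  · exact le_rfl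
  have e1 : ∀ (u v : Fin X → ℝ) (k l : Fin X),
      P.transpose.mulVec u k * P.transpose.mulVec v l
        = ∑ a, ∑ b, (P a k * u a) * (P b l * v b) := by
    intro u v k l
    simp only [Matrix.mulVec, dotProduct, Matrix.transpose_apply, Finset.sum_mul_sum]
  have key : 0 ≤ ∑ a, ∑ b,
      (P a i * P b j - P a j * P b i) * (p a * q b - p b * q a) := by
    refine Finset.sum_nonneg fun a _ => Finset.sum_nonneg fun b _ => ?_
    rcases lt_trichotomy a b with hab | rfl | hab
    · have h1 := hTP2 a b j i hab hlt
      have h2 := h b a hab.le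
      exact mul_nonneg_of_nonpos_of_nonpos (by linarith) (by linarith)
    · simp
    · have h1 := hTP2 b a j i hab hlt
      have h2 := h a b hab.le
      exact mul_nonneg (by linarith) (by linarith)
  have e2 : ∑ a, ∑ b, (P a i * P b j - P a j * P b i) * (p a * q b - p b * q a)
      = (P.transpose.mulVec p i * P.transpose.mulVec q j
        - P.transpose.mulVec p j * P.transpose.mulVec q i)
      + (P.transpose.mulVec p i * P.transpose.mulVec q j
        - P.transpose.mulVec p j * P.transpose.mulVec q i) := by
    have c : P.transpose.mulVec p i * P.transpose.mulVec q j
        - P.transpose.mulVec p j * P.transpose.mulVec q i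
        = P.transpose.mulVec q j * P.transpose.mulVec p i
        - P.transpose.mulVec q i * P.transpose.mulVec p j := by ring
    nth_rewrite 2 [c]
    simp only [e1, ← Finset.sum_sub_distrib, ← Finset.sum_add_distrib]
    refine Finset.sum_congr rfl fun a _ => Finset.sum_congr rfl fun b _ => ?_
    ring
  linarith

/-- If `P` is a TP2 row-stochastic matrix and `π ≤_r π̄`, then `Pᵀπ ≤_r Pᵀπ̄`.
Consequently, if `π₀ ≤_r Pᵀπ₀` then the predictor sequence `(Pᵀ)ⁿ π₀` is MLR increasing. -/
theorem stmt_7 (X : ℕ) (P : Matrix (Fin X) (Fin X) ℝ)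
    (hnn : ∀ i j, 0 ≤ P i j) (hrow : ∀ i, ∑ j, P i j = 1) (hTP2 : IsTP2 P)
    (π πb : Fin X → ℝ)
    (hπnn : ∀ i, 0 ≤ π i) (hπsum : ∑ i, π i = 1)
    (hπbnn : ∀ i, 0 ≤ πb i) (hπbsum : ∑ i, πb i = 1)
    (hMLR : MLRle π πb) :
    MLRle (P.transpose.mulVec π) (P.transpose.mulVec πb) ∧
    (∀ π₀ : Fin X → ℝ, (∀ i, 0 ≤ π₀ i) → (∑ i, π₀ i = 1) →
      MLRle π₀ (P.transpose.mulVec π₀) →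
      ∀ n : ℕ, MLRle ((P.transpose ^ n).mulVec π₀) ((P.transpose ^ (n + 1)).mulVec π₀)) := by
  refine ⟨mlr_step_aux P hTP2 π πb hMLR, ?_⟩
  intro π₀ _ _ h0 n
  induction n with
  | zero => simpa using h0
  | succ n ih =>
    have := mlr_step_aux P hTP2 _ _ ih
    simpa only [Matrix.mulVec_mulVec, ← pow_succ'] using this
end

section
/- Nash certification for discounted Markov games: consider a two-player Markov game on state space {1,…,X} with finite action set 𝒰 for each player, costs c_l(i,a,b) for l = 1,2, transition probabilities P_{ij}(a,b) (row-stochastic in (i,j) for each action pair), and discount factor ρ ∈ [0,1). A stationary randomized policy p for player 1 assigns to each state i a pmf p(i,·) on 𝒰 (similarly q for player 2). Define the induced row-stochastic matrix P(p,q)_{ij} = Σ_{a,b} P_{ij}(a,b) p(i,a) q(i,b), cost vectors c_l(p,q)_i = Σ_{a,b} c_l(i,a,b) p(i,a) q(i,b), and discounted costs J^l_{p,q} = Σ_{k=0}^∞ ρᵏ P(p,q)ᵏ c_l(p,q) (this series converges). Suppose policies (p*, q*) and vectors V¹, V² ∈ ℝ^X satisfy: V¹ = c₁(p*,q*) + ρ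 P(p*,q*) V¹ and V² = c₂(p*,q*) + ρ P(p*,q*) V², and for every policy p, V¹ ≤ c₁(p,q*) + ρ P(p,q*) V¹ entrywise, and for every policy q, V² ≤ c₂(p*,q) + ρ P(p*,q) V² entrywise. Then J¹_{p*,q*} = V¹, J²_{p*,q*} = V², and for all policies p and q, J¹_{p,q*} ≥ V¹ and J²_{p*,q} ≥ V² entrywise; that is, (p*, q*) is a Nash equilibrium of the discounted Markov game. -/
/-- A stationary randomized policy assigns to each state a pmf over actions. -/
def IsPolicy {X : ℕ} {U : Type*} [Fintype U] (p : Fin X → U → ℝ) : Prop :=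
  (∀ i a, 0 ≤ p i a) ∧ ∀ i, ∑ a, p i a = 1

/-- The transition matrix induced by a pair of stationary randomized policies. -/
def inducedMat {X : ℕ} {U : Type*} [Fintype U]
    (P : Fin X → Fin X → U → U → ℝ) (p q : Fin X → U → ℝ) :
    Matrix (Fin X) (Fin X) ℝ :=
  fun i j => ∑ a, ∑ b, P i j a b * p i a * q i b

/-- The expected one-stage cost vector induced by a pair of policies. -/
def inducedCost {X : ℕ} {U : Type*} [Fintype U]
    (c : Fin X → U → U → ℝ) (p q : Fin X → U → ℝ) : Fin X → ℝ :=
  fun i => ∑ a, ∑ b, c i a b * p i a * q i b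

/-- The discounted cost `J = Σ_k ρᵏ P(p,q)ᵏ c(p,q)`. -/
noncomputable def discountedJ {X : ℕ} {U : Type*} [Fintype U]
    (P : Fin X → Fin X → U → U → ℝ) (c : Fin X → U → U → ℝ) (ρ : ℝ)
    (p q : Fin X → U → ℝ) : Fin X → ℝ :=
  ∑' k : ℕ, ρ ^ k • ((inducedMat P p q) ^ k).mulVec (inducedCost c p q)

theorem aux_mulVec {X : ℕ} (M : Matrix (Fin X) (Fin X) ℝ) (v : Fin X → ℝ)
    (i : Fin X) : M.mulVec v i = ∑ j, M i j * v j := by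
  simp only [Matrix.mulVec, dotProduct]

theorem aux_bd {X : ℕ} (M : Matrix (Fin X) (Fin X) ℝ) (h0 : ∀ i j, 0 ≤ M i j)
    (h1 : ∀ i, ∑ j, M i j = 1) (v : Fin X → ℝ) : ‖M.mulVec v‖ ≤ ‖v‖ := by
  rw [pi_norm_le_iff_of_nonneg (norm_nonneg v)]
  intro i
  calc ‖M.mulVec v i‖ ≤ ∑ j, ‖M i j * v j‖ := by
            rw [aux_mulVec]; exact norm_sum_le _ _
    _ ≤ ∑ j, M i j * ‖v‖ := by
      apply Finset.sum_le_sum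
      intro j _
      rw [norm_mul, Real.norm_of_nonneg (h0 i j)]
      exact mul_le_mul_of_nonneg_left (norm_le_pi_norm v j) (h0 i j)
    _ = ‖v‖ := by rw [← Finset.sum_mul, h1, one_mul]

theorem aux_pow {X : ℕ} (M : Matrix (Fin X) (Fin X) ℝ) (h0 : ∀ i j, 0 ≤ M i j)
    (h1 : ∀ i, ∑ j, M i j = 1) (v : Fin X → ℝ) (k : ℕ) : ‖(M ^ k).mulVec v‖ ≤ ‖v‖ := by
  induction k with
  | zero => simp
  | succ k ih =>
    rw [pow_succ', ← Matrix.mulVec_mulVec]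
    exact (aux_bd M h0 h1 _).trans ih

theorem aux_summable {X : ℕ} (M : Matrix (Fin X) (Fin X) ℝ) (h0 : ∀ i j, 0 ≤ M i j)
    (h1 : ∀ i, ∑ j, M i j = 1) (ρ : ℝ) (hρ0 : 0 ≤ ρ) (hρ1 : ρ < 1) (v : Fin X → ℝ) :
    Summable (fun k : ℕ => ρ ^ k • (M ^ k).mulVec v) := by
  apply Summable.of_norm_bounded (g := fun k => ρ ^ k * ‖v‖)
  · exact (summable_geometric_of_lt_one hρ0 hρ1).mul_right _
  · intro k
    rw [norm_smul, Real.norm_of_nonneg (pow_nonneg hρ0 k)]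
    exact mul_le_mul_of_nonneg_left (aux_pow M h0 h1 v k) (pow_nonneg hρ0 k)

theorem aux_pow_nonneg {X : ℕ} (M : Matrix (Fin X) (Fin X) ℝ) (h0 : ∀ i j, 0 ≤ M i j)
    (v : Fin X → ℝ) (hv : 0 ≤ v) (k : ℕ) : 0 ≤ (M ^ k).mulVec v := by
  induction k with
  | zero => simpa using hv
  | succ k ih =>
    rw [pow_succ', ← Matrix.mulVec_mulVec]
    intro i
    rw [aux_mulVec]
    exact Finset.sum_nonneg fun j _ => mul_nonneg (h0 i j) (ih j)

theorem aux_tsum {X : ℕ} (M : Matrix (Fin X) (Fin X) ℝ) (h0 : ∀ i j, 0 ≤ M i j)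
    (h1 : ∀ i, ∑ j, M i j = 1) (ρ : ℝ) (hρ0 : 0 ≤ ρ) (hρ1 : ρ < 1) (V c : Fin X → ℝ) :
    ∑' k : ℕ, ρ ^ k • (M ^ k).mulVec c
      = V + ∑' k : ℕ, ρ ^ k • (M ^ k).mulVec (c + ρ • M.mulVec V - V) := by
  have sV := aux_summable M h0 h1 ρ hρ0 hρ1 V
  have sc := aux_summable M h0 h1 ρ hρ0 hρ1 c
  have sV' := (summable_nat_add_iff 1).2 sV
  have e := sV.tsum_eq_zero_add
  have key : ∀ k : ℕ, ρ ^ k • (M ^ k).mulVec (c + ρ • M.mulVec V - V)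
      = ρ ^ k • (M ^ k).mulVec c + ρ ^ (k+1) • (M ^ (k+1)).mulVec V
        - ρ ^ k • (M ^ k).mulVec V := by
    intro k
    rw [Matrix.mulVec_sub, Matrix.mulVec_add, Matrix.mulVec_smul, Matrix.mulVec_mulVec,
      ← pow_succ, smul_sub, smul_add, smul_smul, ← pow_succ]
  simp_rw [key]
  rw [(sc.add sV').tsum_sub sV, sc.tsum_add sV', e]
  simp

theorem aux_mat {X : ℕ} {U : Type*} [Fintype U] (P : Fin X → Fin X → U → U → ℝ)
    (hPnn : ∀ i j a b, 0 ≤ P i j a b) (hProw : ∀ i a b, ∑ j, P i j a b = 1)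
    (p q : Fin X → U → ℝ) (hp : IsPolicy p) (hq : IsPolicy q) :
    (∀ i j, 0 ≤ inducedMat P p q i j) ∧ ∀ i, ∑ j, inducedMat P p q i j = 1 := by
  constructor
  · intro i j
    exact Finset.sum_nonneg fun a _ => Finset.sum_nonneg fun b _ =>
      mul_nonneg (mul_nonneg (hPnn _ _ _ _) (hp.1 _ _)) (hq.1 _ _)
  · intro i
    unfold inducedMat
    rw [Finset.sum_comm]
    have : ∀ a, ∑ j, ∑ b, P i j a b * p i a * q i b = p i a := by
      intro a
      rw [Finset.sum_comm]
      simp_rw [← Finset.sum_mul, hProw, one_mul, ← Finset.mul_sum, hq.2, mul_one]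
    simp_rw [this, hp.2]

theorem aux_eq {X : ℕ} (M : Matrix (Fin X) (Fin X) ℝ) (h0 : ∀ i j, 0 ≤ M i j)
    (h1 : ∀ i, ∑ j, M i j = 1) (ρ : ℝ) (hρ0 : 0 ≤ ρ) (hρ1 : ρ < 1) (V c : Fin X → ℝ)
    (h : V = c + ρ • M.mulVec V) : ∑' k : ℕ, ρ ^ k • (M ^ k).mulVec c = V := by
  rw [aux_tsum M h0 h1 ρ hρ0 hρ1 V c, ← h]
  simp

theorem aux_le {X : ℕ} (M : Matrix (Fin X) (Fin X) ℝ) (h0 : ∀ i j, 0 ≤ M i j)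
    (h1 : ∀ i, ∑ j, M i j = 1) (ρ : ℝ) (hρ0 : 0 ≤ ρ) (hρ1 : ρ < 1) (V c : Fin X → ℝ)
    (h : ∀ i, V i ≤ c i + ρ * M.mulVec V i) : V ≤ ∑' k : ℕ, ρ ^ k • (M ^ k).mulVec c := by
  rw [aux_tsum M h0 h1 ρ hρ0 hρ1 V c]
  refine le_add_of_nonneg_right (tsum_nonneg fun k => ?_)
  refine smul_nonneg (pow_nonneg hρ0 k) (aux_pow_nonneg M h0 _ ?_ k)
  intro i
  simpa using h i

/-- Nash certification for two-player discounted Markov games: if `(p*, q*)` and value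
vectors `V¹, V²` satisfy the fixed-point equalities and the one-sided Bellman inequalities,
then the discounted-cost series converge, `J¹_{p*,q*} = V¹`, `J²_{p*,q*} = V²`, and every
unilateral deviation gives an entrywise larger cost — i.e. `(p*, q*)` is a Nash equilibrium. -/
theorem stmt_11 (X : ℕ) (U : Type*) [Fintype U] [Nonempty U]
    (P : Fin X → Fin X → U → U → ℝ)
    (hPnn : ∀ i j a b, 0 ≤ P i j a b) (hProw : ∀ i a b, ∑ j, P i j a b = 1)
    (c1 c2 : Fin X → U → U → ℝ)
    (ρ : ℝ) (hρ0 : 0 ≤ ρ) (hρ1 : ρ < 1)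
    (pstar qstar : Fin X → U → ℝ) (hp : IsPolicy pstar) (hq : IsPolicy qstar)
    (V1 V2 : Fin X → ℝ)
    (hV1eq : V1 = inducedCost c1 pstar qstar + ρ • (inducedMat P pstar qstar).mulVec V1)
    (hV2eq : V2 = inducedCost c2 pstar qstar + ρ • (inducedMat P pstar qstar).mulVec V2)
    (hV1le : ∀ p : Fin X → U → ℝ, IsPolicy p → ∀ i,
      V1 i ≤ inducedCost c1 p qstar i + ρ * (inducedMat P p qstar).mulVec V1 i)
    (hV2le : ∀ q : Fin X → U → ℝ, IsPolicy q → ∀ i,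
      V2 i ≤ inducedCost c2 pstar q i + ρ * (inducedMat P pstar q).mulVec V2 i) :
    (∀ p q : Fin X → U → ℝ, IsPolicy p → IsPolicy q →
      Summable (fun k : ℕ => ρ ^ k • ((inducedMat P p q) ^ k).mulVec (inducedCost c1 p q)) ∧
      Summable (fun k : ℕ => ρ ^ k • ((inducedMat P p q) ^ k).mulVec (inducedCost c2 p q))) ∧
    discountedJ P c1 ρ pstar qstar = V1 ∧
    discountedJ P c2 ρ pstar qstar = V2 ∧
    (∀ p : Fin X → U → ℝ, IsPolicy p → ∀ i, V1 i ≤ discountedJ P c1 ρ p qstar i) ∧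
    (∀ q : Fin X → U → ℝ, IsPolicy q → ∀ i, V2 i ≤ discountedJ P c2 ρ pstar q i) := by
  have hm := aux_mat P hPnn hProw
  refine ⟨fun p q h h' => ⟨?_, ?_⟩, ?_, ?_, fun p h => ?_, fun q h => ?_⟩
  · exact aux_summable _ (hm p q h h').1 (hm p q h h').2 ρ hρ0 hρ1 _
  · exact aux_summable _ (hm p q h h').1 (hm p q h h').2 ρ hρ0 hρ1 _
  · exact aux_eq _ (hm _ _ hp hq).1 (hm _ _ hp hq).2 ρ hρ0 hρ1 _ _ hV1eq
  · exact aux_eq _ (hm _ _ hp hq).1 (hm _ _ hp hq).2 ρ hρ0 hρ1 _ _ hV2eq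
  · exact aux_le _ (hm _ _ h hq).1 (hm _ _ h hq).2 ρ hρ0 hρ1 _ _ (hV1le p h)
  · exact aux_le _ (hm _ _ hp h).1 (hm _ _ hp h).2 ρ hρ0 hρ1 _ _ (hV2le q h)
end

section
/- Neyman–Pearson lemma: let (E, 𝒜, ν) be a measure space and let f, g : E → [0,∞) be measurable with ∫ f dν = ∫ g dν = 1. Fix a constant c > 0 and define the decision rule φ*(x) = 1 if f(x) < c·g(x) and φ*(x) = 0 if f(x) ≥ c·g(x). Suppose ∫ f φ* dν = α. Then for every measurable decision rule φ : E → [0,1] with ∫ f φ dν ≤ α, one has ∫ g φ dν ≤ ∫ g φ* dν; that is, among all decision rules with false-rejection probability at most α, the likelihood-ratio threshold rule φ* maximizes the detection probability ∫ g φ dν. -/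
open MeasureTheory

/-- Neyman–Pearson lemma: among all decision rules `φ : E → [0,1]` with false-rejection
probability `∫ f φ dν ≤ α`, the likelihood-ratio threshold rule
`φ*(x) = 1 if f(x) < c·g(x), else 0` (with `∫ f φ* dν = α`) maximizes the detection
probability `∫ g φ dν`. -/
theorem stmt_12 {E : Type*} [MeasurableSpace E] (ν : Measure E)
    (f g : E → ℝ) (hf : Measurable f) (hg : Measurable g)
    (hfnn : ∀ x, 0 ≤ f x) (hgnn : ∀ x, 0 ≤ g x)
    (hfint : Integrable f ν) (hgint : Integrable g ν)
    (hf1 : ∫ x, f x ∂ν = 1) (hg1 : ∫ x, g x ∂ν = 1)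
    (c : ℝ) (hc : 0 < c) (α : ℝ)
    (φstar : E → ℝ) (hφstar : ∀ x, φstar x = if f x < c * g x then 1 else 0)
    (hα : ∫ x, f x * φstar x ∂ν = α) :
    ∀ φ : E → ℝ, Measurable φ → (∀ x, φ x ∈ Set.Icc (0 : ℝ) 1) →
      (∫ x, f x * φ x ∂ν) ≤ α →
      (∫ x, g x * φ x ∂ν) ≤ ∫ x, g x * φstar x ∂ν := by
  intro φ hφ h01 hle
  have hsm : Measurable φstar := by
    have : φstar = fun x => if f x < c * g x then (1 : ℝ) else 0 := funext hφstar
    rw [this]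
    exact Measurable.ite (measurableSet_lt hf (hg.const_mul c)) measurable_const measurable_const
  have hs01 : ∀ x, φstar x ∈ Set.Icc (0 : ℝ) 1 := by
    intro x
    rw [hφstar]
    split_ifs <;> simp
  have key : ∀ (h ψ : E → ℝ), Integrable h ν → Measurable ψ →
      (∀ x, ψ x ∈ Set.Icc (0 : ℝ) 1) → Integrable (fun x => h x * ψ x) ν := by
    intro h ψ hh hψ hb
    refine hh.mul_bdd (c := 1) hψ.aestronglyMeasurable (Filter.Eventually.of_forall fun x => ?_)
    rw [Real.norm_eq_abs, abs_of_nonneg (hb x).1]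
    exact (hb x).2
  have i1 := key f φ hfint hφ h01
  have i2 := key f φstar hfint hsm hs01
  have i3 := key g φ hgint hφ h01
  have i4 := key g φstar hgint hsm hs01
  have hmono : ∫ x, (c * (g x * φ x) + f x * φstar x) ∂ν
      ≤ ∫ x, (c * (g x * φstar x) + f x * φ x) ∂ν := by
    refine integral_mono ((i3.const_mul c).add i2) ((i4.const_mul c).add i1) fun x => ?_
    have h0 := (h01 x).1
    have h1 := (h01 x).2
    have hs := hφstar x
    simp only
    rw [hs]
    split_ifs with hlt
    · nlinarith [mul_nonneg (sub_nonneg.2 hlt.le) (sub_nonneg.2 h1)]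
    · nlinarith [mul_nonneg (sub_nonneg.2 (not_lt.1 hlt)) h0]
  rw [integral_add (i3.const_mul c) i2, integral_add (i4.const_mul c) i1,
    integral_const_mul, integral_const_mul, hα] at hmono
  refine le_of_mul_le_mul_left ?_ hc
  linarith
end

section
/- Sensitivity of the HMM filter to the transition matrix (sample-path bound): let B_{iy} > 0 for i ∈ {1,…,X} and y in a finite observation set, and let P and P̄ be X×X row-stochastic matrices with Σ_j |P_{ij} − P̄_{ij}| ≤ ε for every row i. For probability vectors π, π̄ and an observation y, define A(π̄,y) = (Σ_m B_{my}(P̄ᵀπ̄)_m) / max_i B_{iy} and μ(y) = (min_i B_{iy}) / (max_i B_{iy}). Then the filter updates satisfy ‖T(π,y;P) − T(π̄,y;P̄)‖₁ ≤ ε / max{A(π̄,y) − ε, μ(y)} + δ(P̄)·‖π − π̄‖₁ / A(π̄,y), where δ(P̄) is the Dobrushin coefficient of P̄ and ‖·‖₁ is the ℓ¹ norm on ℝ^X. -/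
/-- The Dobrushin coefficient of a row-stochastic matrix:
`δ(P) = (1/2) · max_{i,j} Σ_l |P_{il} − P_{jl}|`. -/
noncomputable def dobrushin (X : ℕ) (P : Matrix (Fin X) (Fin X) ℝ) : ℝ :=
  (1 / 2) * ⨆ i : Fin X, ⨆ j : Fin X, ∑ l, |P i l - P j l|

/-- The HMM filter normalization `σ(π,y;P) = Σ_m B_{my} (Pᵀπ)_m`. -/
noncomputable def hmmSigma {X : ℕ} {Y : Type*} [Fintype Y]
    (P : Matrix (Fin X) (Fin X) ℝ) (B : Fin X → Y → ℝ) (π : Fin X → ℝ) (y : Y) : ℝ :=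
  ∑ m, B m y * P.transpose.mulVec π m

/-- The HMM filter update `T(π,y;P)_j = B_{jy}(Pᵀπ)_j / σ(π,y;P)`. -/
noncomputable def hmmFilter {X : ℕ} {Y : Type*} [Fintype Y]
    (P : Matrix (Fin X) (Fin X) ℝ) (B : Fin X → Y → ℝ) (π : Fin X → ℝ) (y : Y) :
    Fin X → ℝ :=
  fun j => B j y * P.transpose.mulVec π j / hmmSigma P B π y

theorem aux_key {X : ℕ} (b d : Fin X → ℝ) (M : ℝ) (hM : ∀ i, b i ≤ M)
    (hd : ∑ i, d i = 0) : ∑ i, b i * |d i| + |∑ i, b i * d i| ≤ M * ∑ i, |d i| := by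
  have h1 : ∑ i, b i * (|d i| + d i) ≤ ∑ i, M * (|d i| + d i) :=
    Finset.sum_le_sum fun i _ => mul_le_mul_of_nonneg_right (hM i) (by linarith [neg_abs_le (d i)])
  have h2 : ∑ i, b i * (|d i| - d i) ≤ ∑ i, M * (|d i| - d i) :=
    Finset.sum_le_sum fun i _ => mul_le_mul_of_nonneg_right (hM i) (by linarith [le_abs_self (d i)])
  simp only [mul_add, mul_sub, Finset.sum_add_distrib, Finset.sum_sub_distrib,
    ← Finset.mul_sum, hd] at h1 h2
  rcases abs_cases (∑ i, b i * d i) with ⟨h, _⟩ | ⟨h, _⟩ <;> rw [h] <;> linarith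

theorem aux_filter {X : ℕ} (b p r : Fin X → ℝ) (M : ℝ) (hM : ∀ i, b i ≤ M)
    (hb : ∀ i, 0 < b i) (hp : ∀ i, 0 ≤ p i)
    (hsum : ∑ i, p i = ∑ i, r i) (hsp : 0 < ∑ i, b i * p i) (hsr : 0 < ∑ i, b i * r i) :
    ∑ j, |b j * p j / (∑ i, b i * p i) - b j * r j / (∑ i, b i * r i)| ≤
      M * (∑ i, |p i - r i|) / (∑ i, b i * r i) := by
  have key := aux_key b (fun i => p i - r i) M hM (by simp [Finset.sum_sub_distrib, hsum])
  have e : ∑ i, b i * (p i - r i) = (∑ i, b i * p i) - ∑ i, b i * r i := by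
    simp [mul_sub, Finset.sum_sub_distrib]
  simp only [e] at key
  set S := ∑ i, b i * p i with hS
  set R := ∑ i, b i * r i with hR
  have hj : ∀ j, |b j * p j / S - b j * r j / R| ≤
      (b j * |p j - r j| + b j * p j * (|S - R| / S)) / R := by
    intro j
    have : b j * p j / S - b j * r j / R = (b j * (p j - r j) - b j * p j * ((S - R) / S)) / R := by
      field_simp
      ring
    rw [this, abs_div, abs_of_pos hsr]
    gcongr
    refine (abs_sub _ _).trans ?_
    rw [abs_mul, abs_mul, abs_div, abs_of_pos hsp, abs_of_pos (hb j),
      abs_of_nonneg (mul_nonneg (hb j).le (hp j))]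
  refine (Finset.sum_le_sum fun j _ => hj j).trans ?_
  rw [← Finset.sum_div, Finset.sum_add_distrib, ← Finset.sum_mul, ← hS, mul_div_cancel₀ _ hsp.ne']
  gcongr

theorem aux_dob {X : ℕ} (hX : 0 < X) (P : Matrix (Fin X) (Fin X) ℝ) (d : Fin X → ℝ)
    (hd : ∑ i, d i = 0) :
    ∑ l, |∑ i, P i l * d i| ≤ dobrushin X P * ∑ i, |d i| := by
  haveI : Nonempty (Fin X) := ⟨⟨0, hX⟩⟩
  have hD : ∀ i j, ∑ l, |P i l - P j l| ≤ 2 * dobrushin X P := by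
    intro i j
    have h1 : ∑ l, |P i l - P j l| ≤ ⨆ j : Fin X, ∑ l, |P i l - P j l| :=
      le_ciSup (f := fun j : Fin X => ∑ l, |P i l - P j l|) (Set.finite_range _).bddAbove j
    have h2 := le_ciSup (f := fun i : Fin X => ⨆ j : Fin X, ∑ l, |P i l - P j l|)
      (Set.finite_range _).bddAbove i
    unfold dobrushin
    linarith
  obtain ⟨s, hs1, hs⟩ : ∃ s : Fin X → ℝ, (∀ l, |s l| ≤ 1) ∧
      ∀ l, |∑ i, P i l * d i| = s l * ∑ i, P i l * d i := by
    refine ⟨fun l => if 0 ≤ ∑ i, P i l * d i then 1 else -1, fun l => ?_, fun l => ?_⟩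
    · dsimp only
      split_ifs <;> simp
    · dsimp only
      split_ifs with h
      · rw [abs_of_nonneg h, one_mul]
      · rw [abs_of_neg (not_le.mp h)]; ring
  set f : Fin X → ℝ := fun i => ∑ l, s l * P i l with hf
  have hff : ∀ i j, f i - f j ≤ 2 * dobrushin X P := by
    intro i j
    refine le_trans ?_ (hD i j)
    rw [hf]
    simp only [← Finset.sum_sub_distrib, ← mul_sub]
    refine Finset.sum_le_sum fun l _ => ?_
    refine (le_abs_self _).trans ?_
    rw [abs_mul]
    exact mul_le_of_le_one_left (abs_nonneg _) (hs1 l)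
  obtain ⟨a, ha⟩ := Finite.exists_max f
  obtain ⟨c, hc⟩ := Finite.exists_min f
  have hmain : ∑ l, |∑ i, P i l * d i| = ∑ i, (f i - (f a + f c) / 2) * d i := by
    simp only [sub_mul, Finset.sum_sub_distrib, ← Finset.mul_sum, hd, mul_zero, sub_zero]
    simp only [hs, hf, Finset.mul_sum, Finset.sum_mul]
    rw [Finset.sum_comm]
    simp only [mul_assoc]
  rw [hmain, Finset.mul_sum]
  refine Finset.sum_le_sum fun i _ => ?_
  refine (le_abs_self _).trans ?_
  rw [abs_mul]
  refine mul_le_mul_of_nonneg_right ?_ (abs_nonneg _)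
  have := hff a c
  rw [abs_le]
  constructor <;> linarith [ha i, hc i]

/-- Sample-path sensitivity bound of the HMM filter to the transition matrix:
`‖T(π,y;P) − T(π̄,y;P̄)‖₁ ≤ ε / max{A(π̄,y) − ε, μ(y)} + δ(P̄)·‖π − π̄‖₁ / A(π̄,y)`
where `A(π̄,y) = σ(π̄,y;P̄)/max_i B_{iy}` and `μ(y) = min_i B_{iy} / max_i B_{iy}`. -/
theorem stmt_13 (X : ℕ) (hX : 0 < X) (Y : Type*) [Fintype Y]
    (B : Fin X → Y → ℝ) (hB : ∀ i y, 0 < B i y)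
    (P Pb : Matrix (Fin X) (Fin X) ℝ)
    (hPnn : ∀ i j, 0 ≤ P i j) (hProw : ∀ i, ∑ j, P i j = 1)
    (hPbnn : ∀ i j, 0 ≤ Pb i j) (hPbrow : ∀ i, ∑ j, Pb i j = 1)
    (ε : ℝ) (hε : ∀ i, ∑ j, |P i j - Pb i j| ≤ ε)
    (π πb : Fin X → ℝ)
    (hπnn : ∀ i, 0 ≤ π i) (hπsum : ∑ i, π i = 1)
    (hπbnn : ∀ i, 0 ≤ πb i) (hπbsum : ∑ i, πb i = 1)
    (y : Y) :
    ∑ j, |hmmFilter P B π y j - hmmFilter Pb B πb y j| ≤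
      ε / max (hmmSigma Pb B πb y / (⨆ i, B i y) - ε) ((⨅ i, B i y) / (⨆ i, B i y)) +
      dobrushin X Pb * (∑ i, |π i - πb i|) / (hmmSigma Pb B πb y / (⨆ i, B i y)) := by
  haveI : Nonempty (Fin X) := ⟨⟨0, hX⟩⟩
  have hmv : ∀ (Q : Matrix (Fin X) (Fin X) ℝ) (v : Fin X → ℝ) m,
      Q.transpose.mulVec v m = ∑ i, Q i m * v i := fun Q v m => rfl
  have hMle : ∀ i, B i y ≤ ⨆ i, B i y := fun i =>
    le_ciSup (f := fun i => B i y) (Set.finite_range _).bddAbove i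
  have hmle : ∀ i, (⨅ i, B i y) ≤ B i y := fun i =>
    ciInf_le (f := fun i => B i y) (Set.finite_range _).bddBelow i
  have hmpos : 0 < ⨅ i, B i y := by
    obtain ⟨c, hc⟩ := Finite.exists_min (fun i => B i y)
    exact (hB c y).trans_le (le_ciInf hc)
  set M := ⨆ i, B i y with hMdef
  set μ := ⨅ i, B i y with hmdef
  have hMpos : 0 < M := (hB ⟨0, hX⟩ y).trans_le (hMle _)
  have hnn : ∀ (Q : Matrix (Fin X) (Fin X) ℝ) (v : Fin X → ℝ), (∀ i j, 0 ≤ Q i j) →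
      (∀ i, 0 ≤ v i) → ∀ m, 0 ≤ Q.transpose.mulVec v m := by
    intro Q v hQ hv m
    rw [hmv]
    exact Finset.sum_nonneg fun i _ => mul_nonneg (hQ i m) (hv i)
  have hone : ∀ (Q : Matrix (Fin X) (Fin X) ℝ) (v : Fin X → ℝ), (∀ i, ∑ j, Q i j = 1) →
      (∑ i, v i = 1) → ∑ m, Q.transpose.mulVec v m = 1 := by
    intro Q v hQ hv
    simp only [hmv]
    rw [Finset.sum_comm]
    simp only [← Finset.sum_mul, hQ, one_mul, hv]
  have hlow : ∀ (Q : Matrix (Fin X) (Fin X) ℝ) (v : Fin X → ℝ), (∀ i j, 0 ≤ Q i j) →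
      (∀ i, 0 ≤ v i) → (∀ i, ∑ j, Q i j = 1) → (∑ i, v i = 1) → μ ≤ hmmSigma Q B v y := by
    intro Q v h1 h2 h3 h4
    calc μ = ∑ m, μ * Q.transpose.mulVec v m := by
          rw [← Finset.mul_sum, hone Q v h3 h4, mul_one]
      _ ≤ _ := Finset.sum_le_sum fun m _ => mul_le_mul_of_nonneg_right (hmle m) (hnn Q v h1 h2 m)
  have hSp := hlow P π hPnn hπnn hProw hπsum
  have hSr := hlow Pb πb hPbnn hπbnn hPbrow hπbsum
  have hε0 : 0 ≤ ε := (Finset.sum_nonneg fun _ _ => abs_nonneg _).trans (hε ⟨0, hX⟩)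
  have key := aux_filter (fun j => B j y) (P.transpose.mulVec π) (Pb.transpose.mulVec πb) M hMle
    (fun i => hB i y) (hnn P π hPnn hπnn)
    ((hone P π hProw hπsum).trans (hone Pb πb hPbrow hπbsum).symm)
    (hmpos.trans_le hSp) (hmpos.trans_le hSr)
  have hdiff : ∑ m, |P.transpose.mulVec π m - Pb.transpose.mulVec πb m| ≤
      ε + dobrushin X Pb * ∑ i, |π i - πb i| := by
    have hD := aux_dob hX Pb (fun i => π i - πb i) (by simp [Finset.sum_sub_distrib, hπsum, hπbsum])
    have h1 : ∑ m, |∑ i, (P i m - Pb i m) * π i| ≤ ε := by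
      calc ∑ m, |∑ i, (P i m - Pb i m) * π i| ≤ ∑ m, ∑ i, |P i m - Pb i m| * π i := by
            refine Finset.sum_le_sum fun m _ => (Finset.abs_sum_le_sum_abs _ _).trans ?_
            refine Finset.sum_le_sum fun i _ => ?_
            rw [abs_mul, abs_of_nonneg (hπnn i)]
        _ = ∑ i, (∑ m, |P i m - Pb i m|) * π i := by
            rw [Finset.sum_comm]
            simp only [Finset.sum_mul]
        _ ≤ ∑ i, ε * π i :=
            Finset.sum_le_sum fun i _ => mul_le_mul_of_nonneg_right (hε i) (hπnn i)
        _ = ε := by rw [← Finset.mul_sum, hπsum, mul_one]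
    refine le_trans ?_ (add_le_add h1 hD)
    rw [← Finset.sum_add_distrib]
    refine Finset.sum_le_sum fun m _ => ?_
    refine le_trans (le_of_eq ?_) (abs_add_le _ _)
    rw [hmv, hmv, ← Finset.sum_add_distrib, ← Finset.sum_sub_distrib]
    congr 1
    exact Finset.sum_congr rfl fun i _ => by ring
  change ∑ j, |hmmFilter P B π y j - hmmFilter Pb B πb y j| ≤
    M * _ / hmmSigma Pb B πb y at key
  have hR : 0 < hmmSigma Pb B πb y := hmpos.trans_le hSr
  set R := hmmSigma Pb B πb y with hRdef
  have hA : 0 < R / M := div_pos hR hMpos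
  refine key.trans ?_
  have e : ∀ x, M * x / R = x / (R / M) := fun x => by field_simp
  rw [e]
  refine (div_le_div_of_nonneg_right hdiff hA.le).trans ?_
  rw [add_div]
  refine add_le_add ?_ le_rfl
  refine div_le_div_of_nonneg_left hε0 (lt_max_of_lt_right (div_pos hmpos hMpos)) ?_
  exact max_le (by linarith) (div_le_div_of_nonneg_right hSr hMpos.le)
end

section
/- Let S ≥ 2 and m : {1,…,S} → (0,1). Define the S×S row-stochastic matrix P by P_{ij} = m(i)(1−m(j))/(S−1) for j ≠ i and P_{ii} = 1 − Σ_{j≠i} P_{ij}. Then the probability vector π_∞ defined by π_∞(θ) = κ (1−m(θ)) ∏_{j≠θ} m(j), with κ > 0 the normalizing constant, is a stationary distribution of P: Pᵀπ_∞ = π_∞. -/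
/-- The stationary distribution of the stochastic search-ruler Markov chain:
for the chain with `P_{ij} = m(i)(1−m(j))/(S−1)` for `j ≠ i` (and diagonal entries making
rows sum to one), the vector `π_∞(θ) = κ (1−m(θ)) ∏_{j≠θ} m(j)` satisfies `Pᵀπ_∞ = π_∞`. -/
theorem stmt_17 (S : ℕ) (hS : 2 ≤ S) (m : Fin S → ℝ)
    (hm0 : ∀ θ, 0 < m θ) (hm1 : ∀ θ, m θ < 1)
    (P : Matrix (Fin S) (Fin S) ℝ)
    (hPoff : ∀ i j : Fin S, j ≠ i → P i j = m i * (1 - m j) / ((S : ℝ) - 1))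
    (hPdiag : ∀ i : Fin S,
      P i i = 1 - ∑ j ∈ Finset.univ.erase i, m i * (1 - m j) / ((S : ℝ) - 1))
    (κ : ℝ) (hκ : κ = (∑ θ, (1 - m θ) * ∏ j ∈ Finset.univ.erase θ, m j)⁻¹)
    (πinf : Fin S → ℝ)
    (hπ : ∀ θ, πinf θ = κ * (1 - m θ) * ∏ j ∈ Finset.univ.erase θ, m j) :
    P.transpose.mulVec πinf = πinf := by
  have key : ∀ i, m i * πinf i = κ * (1 - m i) * ∏ j, m j := by
    intro i
    rw [hπ, ← Finset.mul_prod_erase Finset.univ m (Finset.mem_univ i)]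
    ring
  funext j
  simp only [Matrix.mulVec, dotProduct, Matrix.transpose_apply]
  rw [← Finset.add_sum_erase Finset.univ _ (Finset.mem_univ j), hPdiag, sub_mul, one_mul,
    Finset.sum_mul]
  have h : ∑ i ∈ Finset.univ.erase j, P i j * πinf i
      = ∑ i ∈ Finset.univ.erase j, m j * (1 - m i) / ((S : ℝ) - 1) * πinf j := by
    refine Finset.sum_congr rfl fun i hi => ?_
    rw [hPoff i j (Finset.ne_of_mem_erase hi).symm]
    have h1 := key i
    have h2 := key j
    calc m i * (1 - m j) / ((S : ℝ) - 1) * πinf i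
        = (m i * πinf i) * (1 - m j) / ((S : ℝ) - 1) := by ring
      _ = (m j * πinf j) * (1 - m i) / ((S : ℝ) - 1) := by rw [h1, h2]; ring
      _ = _ := by ring
  rw [h]
  ring
end

section
/- Stochastic search-ruler theorem: let S ≥ 2 and m : {1,…,S} → (0,1), and define the S×S row-stochastic matrix P by P_{ij} = m(i)(1−m(j))/(S−1) for j ≠ i and P_{ii} = 1 − Σ_{j≠i} P_{ij}. This chain is irreducible (all off-diagonal entries are positive), and its unique stationary distribution π_∞ satisfies, for the global minimizer θ* with m(θ*) < m(θ) for all θ ≠ θ*, the ratio π_∞(θ*)/π_∞(θ) = [m(θ)(1−m(θ*))]/[m(θ*)(1−m(θ))] > 1 for every θ ≠ θ*; hence the stationary distribution puts strictly more mass on θ* than on any other candidate. -/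
/-- Stochastic search-ruler theorem: the candidate-solution Markov chain with
`P_{ij} = m(i)(1−m(j))/(S−1)` for `j ≠ i` has all off-diagonal entries positive
(irreducibility), a unique stationary distribution, and that stationary distribution puts
strictly more mass on the global minimizer `θ*` than on any other candidate, with
`π_∞(θ*)/π_∞(θ) = [m(θ)(1−m(θ*))]/[m(θ*)(1−m(θ))] > 1`. -/
theorem stmt_18 (S : ℕ) (hS : 2 ≤ S) (m : Fin S → ℝ)
    (hm0 : ∀ θ, 0 < m θ) (hm1 : ∀ θ, m θ < 1)
    (P : Matrix (Fin S) (Fin S) ℝ)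
    (hPoff : ∀ i j : Fin S, j ≠ i → P i j = m i * (1 - m j) / ((S : ℝ) - 1))
    (hPdiag : ∀ i : Fin S,
      P i i = 1 - ∑ j ∈ Finset.univ.erase i, m i * (1 - m j) / ((S : ℝ) - 1))
    (θstar : Fin S) (hθstar : ∀ θ : Fin S, θ ≠ θstar → m θstar < m θ) :
    (∀ i j : Fin S, i ≠ j → 0 < P i j) ∧
    (∃! π : Fin S → ℝ, (∀ θ, 0 ≤ π θ) ∧ (∑ θ, π θ = 1) ∧ P.transpose.mulVec π = π) ∧
    (∀ π : Fin S → ℝ, (∀ θ, 0 ≤ π θ) → (∑ θ, π θ = 1) → P.transpose.mulVec π = π →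
      ∀ θ : Fin S, θ ≠ θstar →
        π θstar / π θ = m θ * (1 - m θstar) / (m θstar * (1 - m θ)) ∧
        1 < π θstar / π θ) := by
  have hS' : (0:ℝ) < (S:ℝ) - 1 := by
    have : (2:ℝ) ≤ (S:ℝ) := by exact_mod_cast hS
    linarith
  have hm1' : ∀ θ, 0 < 1 - m θ := fun θ => by linarith [hm1 θ]
  have hne : (Finset.univ : Finset (Fin S)).Nonempty := ⟨θstar, Finset.mem_univ _⟩
  set B : ℝ := ∑ i, (1 - m i) with hB
  have hBpos : 0 < B := Finset.sum_pos (fun i _ => hm1' i) hne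
  have hP : ∀ i j, P i j = m i * (1 - m j) / ((S : ℝ) - 1)
      + (if i = j then 1 - m i * B / ((S : ℝ) - 1) else 0) := by
    intro i j
    by_cases h : i = j
    · subst h
      have h2 := Finset.add_sum_erase Finset.univ
        (fun j => m i * (1 - m j) / ((S : ℝ) - 1)) (Finset.mem_univ i)
      have h3 : ∑ j, m i * (1 - m j) / ((S : ℝ) - 1) = m i * B / ((S : ℝ) - 1) := by
        rw [hB, ← Finset.sum_div, Finset.mul_sum]
      rw [hPdiag i, if_pos rfl]
      linarith
    · rw [hPoff i j (Ne.symm h), if_neg h, add_zero]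
  have key : ∀ π : Fin S → ℝ, P.transpose.mulVec π = π ↔
      ∀ j, (1 - m j) * (∑ i, m i * π i) = π j * m j * B := by
    intro π
    rw [funext_iff]
    refine forall_congr' fun j => ?_
    have e : P.transpose.mulVec π j = (1 - m j) * (∑ i, m i * π i) / ((S : ℝ) - 1)
        + (1 - m j * B / ((S : ℝ) - 1)) * π j := by
      simp only [Matrix.mulVec, dotProduct, Matrix.transpose_apply, hP, add_mul, ite_mul,
        zero_mul, Finset.sum_add_distrib, Finset.sum_ite_eq', Finset.mem_univ, if_true]
      congr 1
      rw [Finset.mul_sum, Finset.sum_div]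
      refine Finset.sum_congr rfl fun i _ => ?_
      ring
    rw [e]
    have e2 : (1 - m j) * (∑ i, m i * π i) / ((S : ℝ) - 1)
        + (1 - m j * B / ((S : ℝ) - 1)) * π j
        = π j + ((1 - m j) * (∑ i, m i * π i) - π j * m j * B) / ((S : ℝ) - 1) := by
      ring
    rw [e2, add_eq_left, div_eq_zero_iff, or_iff_left hS'.ne', sub_eq_zero]
  set W : ℝ := ∑ i, (1 - m i) / m i with hW
  have hWpos : 0 < W := Finset.sum_pos (fun i _ => div_pos (hm1' i) (hm0 i)) hne
  have uniq : ∀ π : Fin S → ℝ, (∑ θ, π θ = 1) → P.transpose.mulVec π = π →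
      ∀ j, π j = (1 - m j) / m j / W := by
    intro π h1 h2
    rw [key] at h2
    have h3 : ∀ j, π j = (1 - m j) / m j * ((∑ i, m i * π i) / B) := by
      intro j
      have := h2 j
      have := (hm0 j).ne'
      field_simp
      linarith
    have h4 : W * ((∑ i, m i * π i) / B) = 1 := by
      rw [← h1, hW, Finset.sum_mul]
      exact Finset.sum_congr rfl fun j _ => (h3 j).symm
    intro j
    rw [h3 j, eq_div_iff hWpos.ne', mul_assoc, mul_comm _ W, h4, mul_one]
  refine ⟨?_, ⟨fun j => (1 - m j) / m j / W, ⟨?_, ?_, ?_⟩, ?_⟩, ?_⟩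
  · intro i j h
    rw [hPoff i j h.symm]
    exact div_pos (mul_pos (hm0 i) (hm1' j)) hS'
  · intro j
    exact (div_pos (div_pos (hm1' j) (hm0 j)) hWpos).le
  · rw [← Finset.sum_div, ← hW, div_self hWpos.ne']
  · rw [key]
    intro j
    have : ∑ i, m i * ((1 - m i) / m i / W) = B / W := by
      rw [hB, Finset.sum_div]
      refine Finset.sum_congr rfl fun i _ => ?_
      have := (hm0 i).ne'
      field_simp
    rw [this]
    have := (hm0 j).ne'
    field_simp
  · rintro π ⟨_, h1, h2⟩
    exact funext (uniq π h1 h2)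
  · intro π _ h1 h2 θ hθ
    have a := hm0 θ
    have b := hm0 θstar
    have c := hm1' θ
    have d := hm1' θstar
    have e : π θstar / π θ = m θ * (1 - m θstar) / (m θstar * (1 - m θ)) := by
      rw [uniq π h1 h2 θ, uniq π h1 h2 θstar]
      field_simp
    refine ⟨e, ?_⟩
    rw [e, one_lt_div (mul_pos b c)]
    have := hθstar θ hθ
    nlinarith
end
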